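/- If a finite 2-dimensional simplicial complex K collapses to a complex consisting of a single triangle and its faces by a sequence of elementary collapses each of which is a (2,0) collapse or a (2,1) collapse, then K is pure 2-dimensional and shellable. -/

import Mathlib

/-!
STATEMENT 8 (Observation 13.2): if a finite 2-dimensional complex collapses to a
single triangle using only (2,0) and (2,1) collapses, then it is pure
2-dimensional and shellable.
-/

namespace PaperFormal

variable {V : Type*}

/-- `K` is a finite abstract simplicial complex. -/
def IsComplex (K : Set (Finset V)) : Prop :=
  (∀ σ ∈ K, σ ≠ ∅) ∧ ∀ σ ∈ K, ∀ τ : Finset V, τ ⊆ σ → τ ≠ ∅ → τ ∈ K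

/-- A facet is an inclusion-maximal face. -/
def IsFacet (K : Set (Finset V)) (σ : Finset V) : Prop :=
  σ ∈ K ∧ ∀ τ ∈ K, σ ⊆ τ → σ = τ

/-- `K` is pure of dimension `d`. -/
def PureDim (K : Set (Finset V)) (d : ℕ) : Prop :=
  K.Nonempty ∧ ∀ σ, IsFacet K σ → σ.card = d + 1

/-- `K[θ_1,…,θ_m]` for the list `l = [θ_1,…,θ_m]`. -/
def generatedByL (K : Set (Finset V)) (l : List (Finset V)) : Set (Finset V) :=
  {τ ∈ K | ∃ θ ∈ l, τ ⊆ θ}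

/-- The shelling-up condition. -/
def UpSteps (K : Set (Finset V)) (d : ℕ) (l : List (Finset V)) : Prop :=
  ∀ i, 0 < i → i < l.length →
    PureDim (generatedByL K [l.getD i ∅] ∩ generatedByL K (l.take i)) (d - 1)

/-- `l` is a shelling up of `K`. -/
def IsShellingUp (K : Set (Finset V)) (d : ℕ) (l : List (Finset V)) : Prop :=
  l.Nodup ∧ (∀ σ, σ ∈ l ↔ IsFacet K σ) ∧ UpSteps K d l

/-- `K` is shellable (with facets of dimension `d`). -/
def Shellable (K : Set (Finset V)) (d : ℕ) : Prop :=
  ∃ l, IsShellingUp K d l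

/-- An elementary collapse of `K` to `K'` through the free face `σ` with unique
containing facet `F`. -/
def ElemCollapseVia (K K' : Set (Finset V)) (σ F : Finset V) : Prop :=
  σ ∈ K ∧ ¬ IsFacet K σ ∧ IsFacet K F ∧ σ ⊆ F ∧
    (∀ G, IsFacet K G → σ ⊆ G → G = F) ∧
    K' = {τ ∈ K | ¬ σ ⊆ τ}

/-- An `(i,j)` collapse: the free face has dimension `j` and its unique
containing facet has dimension `i`. -/
def ElemCollapseIJ (K K' : Set (Finset V)) (i j : ℕ) : Prop :=
  ∃ σ F, ElemCollapseVia K K' σ F ∧ σ.card = j + 1 ∧ F.card = i + 1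

/-- Strengthened invariant for the induction. -/
def Good (K : Set (Finset V)) : Prop :=
  ∃ l : List (Finset V), l.Nodup ∧ (∀ σ, σ ∈ l ↔ σ ∈ K ∧ σ.card = 3) ∧
    (∀ σ ∈ K, ∃ θ ∈ l, σ ⊆ θ) ∧ UpSteps K 2 l

theorem good_step (K K' : Set (Finset V)) (hK : IsComplex K) (hfin : K.Finite)
    (hdim : ∀ σ ∈ K, σ.card ≤ 3) (σ F : Finset V) (h : ElemCollapseVia K K' σ F)
    (hF : F.card = 3) (hG : Good K') : Good K := by
  classical
  obtain ⟨hσ, _, hFf, hσF, huniq, rfl⟩ := h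
  obtain ⟨l, hnd, hmem, hcov, hup⟩ := hG
  have hlK : ∀ θ ∈ l, θ ∈ K ∧ ¬ σ ⊆ θ := fun θ hθ => ((hmem θ).1 hθ).1
  have hsub : ∀ τ ∈ K, σ ⊆ τ → τ ⊆ F := by
    intro τ hτ hστ
    obtain ⟨m, hm, hmax⟩ := hfin.exists_le_maximal hτ
    have hmf : IsFacet K m := ⟨hmax.1, fun ρ hρ hmρ => le_antisymm hmρ (hmax.2 hρ hmρ)⟩
    rw [← huniq m hmf (hστ.trans hm)]
    exact hm
  have hgen : ∀ l' : List (Finset V), (∀ θ ∈ l', θ ∈ l) →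
      generatedByL K l' = generatedByL {τ ∈ K | ¬ σ ⊆ τ} l' := by
    intro l' hl'
    ext τ
    constructor
    · rintro ⟨h1, θ, h2, h3⟩
      exact ⟨⟨h1, fun h => (hlK θ (hl' θ h2)).2 (h.trans h3)⟩, θ, h2, h3⟩
    · rintro ⟨h1, h2⟩
      exact ⟨h1.1, h2⟩
  refine ⟨l ++ [F], ?_, ?_, ?_, ?_⟩
  · rw [List.nodup_append]
    refine ⟨hnd, by simp, ?_⟩
    intro a ha b hb hab
    simp only [List.mem_singleton] at hb
    subst hb
    subst hab
    exact (hlK _ ha).2 hσF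
  · intro τ
    simp only [List.mem_append, List.mem_singleton]
    constructor
    · rintro (h | rfl)
      · exact ⟨(hlK τ h).1, ((hmem τ).1 h).2⟩
      · exact ⟨hFf.1, hF⟩
    · rintro ⟨h1, h2⟩
      by_cases hs : σ ⊆ τ
      · exact Or.inr (Finset.eq_of_subset_of_card_le (hsub τ h1 hs) (by omega))
      · exact Or.inl ((hmem τ).2 ⟨⟨h1, hs⟩, h2⟩)
  · intro τ hτ
    by_cases hs : σ ⊆ τ
    · exact ⟨F, by simp, hsub τ hτ hs⟩
    · obtain ⟨θ, h1, h2⟩ := hcov τ ⟨hτ, hs⟩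
      exact ⟨θ, by simp [h1], h2⟩
  · intro i hi0 hi
    simp only [List.length_append, List.length_singleton] at hi
    by_cases hil : i < l.length
    · have := hup i hi0 hil
      rw [List.getD_append _ _ _ _ hil, List.take_append_of_le_length hil.le]
      rw [hgen, hgen]
      · exact this
      · intro θ hθ
        exact List.mem_of_mem_take hθ
      · intro θ hθ
        simp only [List.mem_singleton] at hθ
        subst hθ
        rw [List.getD_eq_getElem _ _ hil]
        exact List.getElem_mem hil
    · have hil' : i = l.length := by omega
      subst hil'
      have e1 : (l ++ [F]).getD l.length ∅ = F := by simp
      have e2 : (l ++ [F]).take l.length = l := by simp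
      rw [e1, e2]
      obtain ⟨v, hv⟩ := Finset.nonempty_iff_ne_empty.2 (hK.1 σ hσ)
      have key : ∀ w ∈ σ, F.erase w ∈ generatedByL K [F] ∩ generatedByL K l := by
        intro w hw
        have hc : (F.erase w).card = 2 := by
          rw [Finset.card_erase_of_mem (hσF hw), hF]
        have hKw : F.erase w ∈ K := by
          refine hK.2 F hFf.1 _ (Finset.erase_subset _ _) ?_
          intro h
          rw [h] at hc
          simp at hc
        refine ⟨⟨hKw, F, by simp, Finset.erase_subset _ _⟩, hKw, hcov _ ⟨hKw, fun h => ?_⟩⟩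
        exact Finset.notMem_erase w F (h hw)
      refine ⟨⟨_, key v hv⟩, ?_⟩
      rintro τ ⟨⟨⟨h1, θ', h2, h3⟩, _, θ, h4, h5⟩, hmax⟩
      simp only [List.mem_singleton] at h2
      subst h2
      have hns : ¬ σ ⊆ τ := fun h => (hlK θ h4).2 (h.trans h5)
      obtain ⟨w, hw, hwτ⟩ := Finset.not_subset.1 hns
      rw [hmax _ (key w hw) (Finset.subset_erase.2 ⟨h3, hwτ⟩),
        Finset.card_erase_of_mem (hσF hw), hF]

theorem good_of_seq (t : Finset V) (ht : t.card = 3) (n : ℕ) :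
    ∀ (c : ℕ → Set (Finset V)), IsComplex (c 0) → (c 0).Finite →
      (∀ σ ∈ c 0, σ.card ≤ 3) →
      c n = {σ : Finset V | σ ≠ ∅ ∧ σ ⊆ t} →
      (∀ i < n, ElemCollapseIJ (c i) (c (i + 1)) 2 0 ∨
        ElemCollapseIJ (c i) (c (i + 1)) 2 1) → Good (c 0) := by
  induction n with
  | zero =>
    intro c _ _ _ hn _
    rw [hn]
    refine ⟨[t], by simp, ?_, ?_, ?_⟩
    · intro σ
      simp only [List.mem_singleton, Set.mem_setOf_eq]
      constructor
      · rintro rfl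
        refine ⟨⟨?_, subset_rfl⟩, ht⟩
        rintro rfl
        simp at ht
      · rintro ⟨⟨_, h⟩, hc⟩
        exact Finset.eq_of_subset_of_card_le h (by omega)
    · rintro σ ⟨_, h⟩
      exact ⟨t, by simp, h⟩
    · intro i h0 h1
      simp only [List.length_singleton] at h1
      omega
  | succ n ih =>
    intro c h1 h2 h3 hn hs
    have hstep : ∃ σ F, ElemCollapseVia (c 0) (c 1) σ F ∧ F.card = 3 := by
      rcases hs 0 (by omega) with ⟨σ, F, h, _, hF⟩ | ⟨σ, F, h, _, hF⟩
      · exact ⟨σ, F, h, hF⟩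
      · exact ⟨σ, F, h, hF⟩
    obtain ⟨σ, F, h, hF⟩ := hstep
    have hsub : c 1 ⊆ c 0 := by
      rw [h.2.2.2.2.2]
      exact Set.sep_subset _ _
    refine good_step (c 0) (c 1) h1 h2 h3 σ F h hF ?_
    refine ih (fun i => c (i + 1)) ?_ (h2.subset hsub) (fun τ hτ => h3 τ (hsub hτ)) hn
      (fun i hi => hs (i + 1) (by omega))
    refine ⟨fun τ hτ => h1.1 τ (hsub hτ), ?_⟩
    intro τ hτ ρ hρ hne
    simp only [zero_add] at hτ ⊢
    rw [h.2.2.2.2.2] at hτ ⊢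
    exact ⟨h1.2 τ hτ.1 ρ hρ hne, fun hh => hτ.2 (hh.trans hρ)⟩

/-- Observation 13.2. -/
theorem shellable_of_collapses_2i (K : Set (Finset V)) (hK : IsComplex K)
    (hKfin : K.Finite)
    (hdim : ∀ σ ∈ K, σ.card ≤ 3)
    (t : Finset V) (ht : t.card = 3)
    (hcol : ∃ (c : ℕ → Set (Finset V)) (n : ℕ), c 0 = K ∧
      c n = {σ : Finset V | σ ≠ ∅ ∧ σ ⊆ t} ∧
      ∀ i < n, ElemCollapseIJ (c i) (c (i + 1)) 2 0 ∨
        ElemCollapseIJ (c i) (c (i + 1)) 2 1) :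
    PureDim K 2 ∧ Shellable K 2 := by
  obtain ⟨c, n, rfl, hn, hs⟩ := hcol
  have hne : (c 0).Nonempty := by
    have hsub : ∀ i ≤ n, c i ⊆ c 0 := by
      intro i
      induction i with
      | zero => intro _; exact subset_rfl
      | succ i ih =>
        intro hi
        refine subset_trans ?_ (ih (by omega))
        rcases hs i (by omega) with ⟨σ, F, h, _⟩ | ⟨σ, F, h, _⟩ <;>
        · rw [h.2.2.2.2.2]
          exact Set.sep_subset _ _
    refine ⟨t, hsub n le_rfl ?_⟩
    rw [hn]
    refine ⟨?_, subset_rfl⟩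
    rintro rfl
    simp at ht
  obtain ⟨l, hnd, hmem, hcov, hup⟩ := good_of_seq t ht n c hK hKfin hdim hn hs
  have hpure : ∀ σ, IsFacet (c 0) σ → σ ∈ l := by
    intro σ hσ
    obtain ⟨θ, h1, h2⟩ := hcov σ hσ.1
    rw [hσ.2 θ ((hmem θ).1 h1).1 h2]
    exact h1
  refine ⟨⟨hne, fun σ hσ => ((hmem σ).1 (hpure σ hσ)).2⟩, l, hnd, ?_, hup⟩
  intro σ
  refine ⟨fun h => ?_, hpure σ⟩
  obtain ⟨h1, h2⟩ := (hmem σ).1 h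
  refine ⟨h1, fun τ hτ hst => Finset.eq_of_subset_of_card_le hst ?_⟩
  have := hdim τ hτ
  omega

end PaperFormal
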